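/- On a 2×2 setting and general d: if τ ∈ P_k(T; 𝕂) (antisymmetric-matrix-valued polynomial on a d-simplex T) satisfies (τ, q)_T = 0 for all q ∈ P_{k-2}(T; 𝕂) and τn = 0 on every face of T, then τ = 0. -/

import Mathlib

open Matrix MvPolynomial MeasureTheory

/-!
Let `λ i` be the barycentric coordinates and `N` the matrix whose rows are the normals of the facets
opposite to all vertices but one. Since those normals form a basis, it suffices to show that
`F = N τ Nᵀ` vanishes. The entry `F i j` vanishes on facet `j` and, by antisymmetry, on facet `i`,
so the primes `λ i` and `λ j` divide it: `F i j = λ i λ j q i j` with `q` antisymmetric of degree at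
most `k - 2`. Testing against `Nᵀ q N` turns the orthogonality into `∑ i j, ∫ λ i λ j (q i j)² = 0`,
a sum of nonnegative terms, so `q = 0`.
-/

section Vanishing

variable {σ R : Type*} [CommRing R]

lemma eq_zero_of_forall_mem_isOpen_eval_eq_zero [IsDomain R] [TopologicalSpace R] [T1Space R]
    [∀ r : R, (nhdsWithin r {r}ᶜ).NeBot] {U : Set (σ → R)} (hU : IsOpen U) (hne : U.Nonempty)
    {f : MvPolynomial σ R} (hf : ∀ x ∈ U, eval x f = 0) : f = 0 := by
  obtain ⟨x, hx⟩ := hne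
  obtain ⟨I, -, s, hs, hsU⟩ := Filter.mem_pi.1 (nhds_pi (a := x) ▸ hU.mem_nhds hx)
  refine MvPolynomial.funext_set s (fun a => infinite_of_mem_nhds (x a) (hs a)) fun y hy => ?_
  rw [map_zero]
  exact hf y (hsU (Set.pi_mono' (fun _ _ => subset_rfl) (Set.subset_univ I) hy))

/-- The substitution `x ↦ x - l(x) w`. When `l` is affine and grows at unit rate in the direction
`w`, this is the projection along `w` onto the hyperplane `l = 0`. -/
noncomputable def substAlong (l : MvPolynomial σ R) (w : σ → R) :
    MvPolynomial σ R →ₐ[R] MvPolynomial σ R :=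
  aeval fun a => X a - l * C (w a)

lemma eval_substAlong (l f : MvPolynomial σ R) (w x : σ → R) :
    eval x (substAlong l w f) = eval (x - eval x l • w) f := by
  have h : (aeval x).comp (substAlong l w) = aeval (R := R) (x - eval x l • w) :=
    algHom_ext fun a => by simp [substAlong, aeval_eq_eval]
  simpa [aeval_eq_eval] using DFunLike.congr_fun h f

lemma dvd_sub_substAlong (l f : MvPolynomial σ R) (w : σ → R) : l ∣ f - substAlong l w f := by
  rw [← Ideal.mem_span_singleton, ← Ideal.Quotient.mk_eq_mk_iff_sub_mem]
  have hl : Ideal.Quotient.mk (Ideal.span {l}) l = 0 :=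
    Ideal.Quotient.eq_zero_iff_mem.2 (Ideal.mem_span_singleton_self l)
  have h : (Ideal.Quotient.mkₐ R (Ideal.span {l})).comp (substAlong l w)
      = Ideal.Quotient.mkₐ R (Ideal.span {l}) :=
    algHom_ext fun a => by simp [substAlong, hl]
  exact (DFunLike.congr_fun h f).symm

lemma dvd_of_forall_mem_isOpen_eval_sub_smul_eq_zero [IsDomain R] [TopologicalSpace R] [T1Space R]
    [∀ r : R, (nhdsWithin r {r}ᶜ).NeBot] {U : Set (σ → R)} (hU : IsOpen U) (hne : U.Nonempty)
    {l f : MvPolynomial σ R} {w : σ → R} (h : ∀ x ∈ U, eval (x - eval x l • w) f = 0) :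
    l ∣ f := by
  have hzero : substAlong l w f = 0 :=
    eq_zero_of_forall_mem_isOpen_eval_eq_zero hU hne fun x hx => by
      rw [eval_substAlong, h x hx]
  simpa [hzero] using dvd_sub_substAlong l f w

end Vanishing

section AffineForm

variable {σ K : Type*} [Fintype σ]

open scoped Classical in
/-- The polynomial in the standard coordinates of `σ → R` representing an affine form. -/
noncomputable def affineFormPoly {R : Type*} [CommRing R] (φ : (σ → R) →ᵃ[R] R) :
    MvPolynomial σ R :=
  C (φ 0) + ∑ a, C (φ.linear (Pi.single a 1)) * X a

@[simp]
lemma eval_affineFormPoly {R : Type*} [CommRing R] (φ : (σ → R) →ᵃ[R] R) (x : σ → R) :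
    eval x (affineFormPoly φ) = φ x := by
  classical
  have hsingle (a : σ) : (fun c => if a = c then (1 : R) else 0) = Pi.single a 1 := by
    ext c
    simp [Pi.single_apply, eq_comm]
  rw [congrFun φ.decomp x, Pi.add_apply, φ.linear.pi_apply_eq_sum_univ x, add_comm]
  simp [affineFormPoly, hsingle, mul_comm]

lemma totalDegree_affineFormPoly_le {R : Type*} [CommRing R] (φ : (σ → R) →ᵃ[R] R) :
    (affineFormPoly φ).totalDegree ≤ 1 := by
  refine (totalDegree_add _ _).trans (max_le (by simp) (totalDegree_finsetSum_le fun a _ => ?_))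
  rw [C_mul_X_eq_monomial]
  exact (totalDegree_monomial_le _ _).trans (by simp)

variable [Field K]

lemma totalDegree_affineFormPoly {φ : (σ → K) →ᵃ[K] K} {x y : σ → K} (hφ : φ x ≠ φ y) :
    (affineFormPoly φ).totalDegree = 1 := by
  refine (totalDegree_affineFormPoly_le φ).antisymm (Nat.one_le_iff_ne_zero.2 fun h => hφ ?_)
  rw [← eval_affineFormPoly φ x, ← eval_affineFormPoly φ y, totalDegree_eq_zero_iff_eq_C.1 h,
    eval_C, eval_C]

lemma prime_affineFormPoly {φ : (σ → K) →ᵃ[K] K} {x y : σ → K} (hφ : φ x ≠ φ y) :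
    Prime (affineFormPoly φ) := by
  have hdeg := totalDegree_affineFormPoly hφ
  refine (irreducible_of_totalDegree_eq_one hdeg fun r hr => ?_).prime
  refine isUnit_iff_ne_zero.2 fun hr0 => ?_
  have hzero : affineFormPoly φ = 0 := by
    ext s
    simpa [hr0] using hr s
  simp [hzero] at hdeg

end AffineForm

section Barycentric

variable {ι κ : Type*}

lemma coord_apply_self_ne_coord_apply {K E : Type*} [Field K] [AddCommGroup E] [Module K E]
    (b : AffineBasis κ K E) {i o : κ} (h : i ≠ o) : b.coord i (b i) ≠ b.coord i (b o) := by
  simp [b.coord_apply_ne h]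

/-- The facet, opposite to `v i`, of the simplex with vertices `v`. -/
def oppositeFacet {E : Type*} [AddCommGroup E] [Module ℝ E] (v : κ → E) (i : κ) : Set E :=
  convexHull ℝ (v '' {i}ᶜ)

lemma apply_mem_oppositeFacet {E : Type*} [AddCommGroup E] [Module ℝ E] (v : κ → E) {i j : κ}
    (h : j ≠ i) : v j ∈ oppositeFacet v i :=
  subset_convexHull ℝ _ ⟨j, h, rfl⟩

lemma sub_coord_smul_mem_oppositeFacet {E : Type*} [AddCommGroup E] [Module ℝ E]
    (b : AffineBasis κ ℝ E) {i o : κ} (h : i ≠ o) {x : E} (hx : x ∈ convexHull ℝ (Set.range b)) :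
    x - b.coord i x • (b i - b o) ∈ oppositeFacet b i := by
  let π : E →ᵃ[ℝ] E := AffineMap.id ℝ E -
    (LinearMap.toSpanSingleton ℝ E (b i - b o)).toAffineMap.comp (b.coord i)
  refine convexHull_min ?_ ((convex_convexHull ℝ (b '' {i}ᶜ)).affine_preimage π) hx
  rintro _ ⟨j, rfl⟩
  obtain rfl | hij := eq_or_ne j i
  · simpa [π, oppositeFacet] using apply_mem_oppositeFacet b h.symm
  · simpa [π, oppositeFacet, b.coord_apply_ne hij.symm] using apply_mem_oppositeFacet b hij

lemma interior_convexHull_range_nonempty [Finite κ] {E : Type*} [NormedAddCommGroup E]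
    [NormedSpace ℝ E] (b : AffineBasis κ ℝ E) :
    (interior (convexHull ℝ (Set.range b))).Nonempty :=
  have := Fintype.ofFinite κ
  ⟨_, b.centroid_mem_interior_convexHull⟩

variable [Fintype ι]

/-- The barycentric coordinate `λ i` of a simplex, as a polynomial in the standard coordinates. -/
noncomputable def baryPoly {K : Type*} [Field K] (b : AffineBasis κ K (ι → K)) (i : κ) :
    MvPolynomial ι K :=
  affineFormPoly (b.coord i)

@[simp]
lemma eval_baryPoly {K : Type*} [Field K] (b : AffineBasis κ K (ι → K)) (i : κ) (x : ι → K) :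
    eval x (baryPoly b i) = b.coord i x :=
  eval_affineFormPoly _ x

lemma not_baryPoly_dvd_baryPoly {K : Type*} [Field K] (b : AffineBasis κ K (ι → K)) {i j : κ}
    (h : i ≠ j) : ¬ baryPoly b j ∣ baryPoly b i := by
  rintro ⟨g, hg⟩
  simpa [b.coord_apply_ne h.symm] using congrArg (eval (b i)) hg

lemma baryPoly_dvd_of_forall_mem_oppositeFacet_eval_eq_zero [Finite κ]
    (b : AffineBasis κ ℝ (ι → ℝ)) {i o : κ} (h : i ≠ o) {f : MvPolynomial ι ℝ}
    (hf : ∀ x ∈ oppositeFacet b i, eval x f = 0) : baryPoly b i ∣ f := by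
  refine dvd_of_forall_mem_isOpen_eval_sub_smul_eq_zero (w := b i - b o) isOpen_interior
    (interior_convexHull_range_nonempty b) fun x hx => hf _ ?_
  rw [eval_baryPoly]
  exact sub_coord_smul_mem_oppositeFacet b h (interior_subset hx)

end Barycentric

section SkewQuotient

variable {α : Type*}

lemma exists_skew_quotient {R : Type*} [CommRing R] [IsDomain R] [CharZero R] {l : α → R}
    (hprime : ∀ i, Prime (l i)) (hndvd : ∀ i j, i ≠ j → ¬ l j ∣ l i) {F : Matrix α α R}
    (hskew : Fᵀ = -F) (hdvd : ∀ i j, l j ∣ F i j) :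
    ∃ q : Matrix α α R, qᵀ = -q ∧ ∀ i j, F i j = l i * l j * q i j := by
  have hF (i j : α) : F j i = -F i j := congrFun₂ hskew i j
  have hex (i j : α) : ∃ r, F i j = l i * l j * r := by
    obtain rfl | hij := eq_or_ne i j
    · exact ⟨0, by simpa using self_eq_neg.1 (hF i i)⟩
    · obtain ⟨g, hg⟩ : l i ∣ F i j := by simpa [hF j i] using hdvd j i
      obtain ⟨r, rfl⟩ := ((hprime j).dvd_or_dvd (hg ▸ hdvd i j)).resolve_left (hndvd i j hij)
      exact ⟨r, by rw [hg, mul_assoc]⟩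
  choose q hq using hex
  refine ⟨Matrix.of q, ?_, hq⟩
  ext i j
  apply mul_left_cancel₀ (mul_ne_zero (hprime j).ne_zero (hprime i).ne_zero)
  change l j * l i * q j i = l j * l i * -q i j
  linear_combination hF i j - hq j i - hq i j

lemma totalDegree_le_sub_two_of_mul_mul {σ R : Type*} [CommRing R] [IsDomain R] {k : ℕ}
    {l₁ l₂ q : MvPolynomial σ R} (h₁ : l₁.totalDegree = 1) (h₂ : l₂.totalDegree = 1)
    (h : (l₁ * l₂ * q).totalDegree ≤ k) : q.totalDegree ≤ k - 2 := by
  obtain rfl | hq := eq_or_ne q 0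
  · simp
  have hl₁ : l₁ ≠ 0 := by rintro rfl; simp at h₁
  have hl₂ : l₂ ≠ 0 := by rintro rfl; simp at h₂
  rw [totalDegree_mul_of_isDomain (mul_ne_zero hl₁ hl₂) hq, totalDegree_mul_of_isDomain hl₁ hl₂,
    h₁, h₂] at h
  lia

lemma exists_skew_bubble_quotient {ι κ : Type*} [Fintype ι] [Finite κ]
    (b : AffineBasis κ ℝ (ι → ℝ)) (o : κ) {k : ℕ}
    {F : Matrix {i // i ≠ o} {i // i ≠ o} (MvPolynomial ι ℝ)}
    (hdeg : ∀ i j, (F i j).totalDegree ≤ k) (hskew : Fᵀ = -F)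
    (hfacet : ∀ i j : {i // i ≠ o}, ∀ x ∈ oppositeFacet b j, eval x (F i j) = 0) :
    ∃ q : Matrix {i // i ≠ o} {i // i ≠ o} (MvPolynomial ι ℝ), qᵀ = -q ∧
      (∀ i j, (q i j).totalDegree ≤ k - 2) ∧
      ∀ i j, F i j = baryPoly b i * baryPoly b j * q i j := by
  have hdeg_bary (i : {i // i ≠ o}) : (baryPoly b i).totalDegree = 1 :=
    totalDegree_affineFormPoly (coord_apply_self_ne_coord_apply b i.2)
  obtain ⟨q, hqskew, hFq⟩ := exists_skew_quotient (l := fun i : {i // i ≠ o} => baryPoly b i)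
    (fun i => prime_affineFormPoly (coord_apply_self_ne_coord_apply b i.2))
    (fun i j hij => not_baryPoly_dvd_baryPoly b (Subtype.coe_ne_coe.2 hij)) hskew
    (fun i j => baryPoly_dvd_of_forall_mem_oppositeFacet_eval_eq_zero b j.2 (hfacet i j))
  exact ⟨q, hqskew, fun i j => totalDegree_le_sub_two_of_mul_mul (hdeg_bary i) (hdeg_bary j)
    (hFq i j ▸ hdeg i j), hFq⟩

end SkewQuotient

section Congruence

variable {α β R : Type*} [Fintype β] [CommRing R]

lemma transpose_mul_mul_transpose_eq_neg {M : Matrix β β R} (hM : Mᵀ = -M) (A : Matrix α β R) :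
    (A * M * Aᵀ)ᵀ = -(A * M * Aᵀ) := by
  simp [transpose_mul, hM, Matrix.mul_assoc]

/-- A matrix of scalars, viewed as a matrix of constant polynomials. -/
noncomputable abbrev constMatrix {γ δ : Type*} (σ : Type*) (A : Matrix γ δ R) :
    Matrix γ δ (MvPolynomial σ R) :=
  A.map C

lemma eval_constMatrix_mul_mul_transpose_eq_zero {σ : Type*} {A : Matrix α β R}
    {M : Matrix β β (MvPolynomial σ R)} {x : σ → R} {j : α}
    (h : ∀ a, ∑ c, eval x (M a c) * A j c = 0) (i : α) :
    eval x ((constMatrix σ A * M * (constMatrix σ A)ᵀ) i j) = 0 := by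
  rw [Matrix.mul_assoc, mul_apply]
  simp [mul_apply, h]

variable [Fintype α]

lemma sum_mul_transpose_mul_mul (A : Matrix α β R) (M : Matrix β β R) (Q : Matrix α α R) :
    ∑ a, ∑ b, M a b * (Aᵀ * Q * A) a b = ∑ i, ∑ j, (A * M * Aᵀ) i j * Q i j := by
  simp only [← hadamard_apply, sum_hadamard_eq]
  calc trace (M * (Aᵀ * Q * A)ᵀ)
      = trace ((M * Aᵀ * Qᵀ) * A) := by simp only [transpose_mul, transpose_transpose,
          Matrix.mul_assoc]
    _ = trace (A * M * Aᵀ * Qᵀ) := by rw [trace_mul_comm]; simp only [Matrix.mul_assoc]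

lemma eq_zero_of_mul_mul_transpose_eq_zero [DecidableEq β] {A : Matrix α β R} {B : Matrix β α R}
    (hBA : B * A = 1) {M : Matrix β β R} (hM : A * M * Aᵀ = 0) : M = 0 :=
  calc M = (B * A) * M * (B * A)ᵀ := by simp [hBA]
    _ = B * (A * M * Aᵀ) * Bᵀ := by simp only [transpose_mul, Matrix.mul_assoc]
    _ = 0 := by simp [hM]

lemma totalDegree_constMatrix_mul_mul_constMatrix_le {σ γ δ : Type*} {k : ℕ} {A : Matrix γ α R}
    {M : Matrix α β (MvPolynomial σ R)} {B : Matrix β δ R} (hM : ∀ i j, (M i j).totalDegree ≤ k)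
    (i : γ) (j : δ) : ((constMatrix σ A * M * constMatrix σ B) i j).totalDegree ≤ k := by
  simp only [mul_apply, map_apply, Finset.sum_mul]
  refine totalDegree_finsetSum_le fun b _ => totalDegree_finsetSum_le fun a _ => ?_
  calc (C (A i a) * M a b * C (B b j)).totalDegree
      ≤ (C (A i a)).totalDegree + (M a b).totalDegree + (C (B b j)).totalDegree :=
        (totalDegree_mul _ _).trans (Nat.add_le_add_right (totalDegree_mul _ _) _)
    _ ≤ k := by simpa using hM a b

lemma exists_mul_of_eq_one_of_dotProduct_eq_zero {K : Type*} [Field K] [DecidableEq β]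
    (w : Module.Basis α K (β → K)) {n : α → β → K} (hn : ∀ i, n i ≠ 0)
    (horth : ∀ i j, i ≠ j → w j ⬝ᵥ n i = 0) : ∃ B : Matrix β α K, B * Matrix.of n = 1 := by
  classical
  have hne (i : α) : w i ⬝ᵥ n i ≠ 0 := fun h => hn i <| dotProduct_eq_zero _ fun v => by
    have hzero : dotProductBilin K K (n i) = 0 := w.ext fun j => by
      obtain rfl | hij := eq_or_ne i j
      · simpa [dotProduct_comm] using h
      · simpa [dotProduct_comm] using horth i j hij
    exact LinearMap.congr_fun hzero v
  have hcard : Fintype.card β = Fintype.card α := by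
    rw [← Module.finrank_eq_card_basis w, Module.finrank_fintype_fun_eq_card]
  refine ⟨(Matrix.of fun j => (w j ⬝ᵥ n j)⁻¹ • w j)ᵀ, (mul_eq_one_comm_of_card_eq β α K hcard).2 ?_⟩
  ext i j
  have hentry : (Matrix.of n * (Matrix.of fun j => (w j ⬝ᵥ n j)⁻¹ • w j)ᵀ) i j
      = (w j ⬝ᵥ n j)⁻¹ * (w j ⬝ᵥ n i) := by
    rw [← smul_eq_mul, ← smul_dotProduct, dotProduct_comm]
    rfl
  obtain rfl | hij := eq_or_ne i j
  · rw [hentry, inv_mul_cancel₀ (hne i), one_apply_eq]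
  · rw [hentry, horth i j hij, mul_zero, one_apply_ne hij]

end Congruence

section Positivity

variable {ι : Type*} {μ : Measure (ι → ℝ)} [μ.IsOpenPosMeasure]
  [IsFiniteMeasureOnCompacts μ] {T : Set (ι → ℝ)}

lemma eq_zero_of_setIntegral_eval_eq_zero [Finite ι] (hT : IsCompact T)
    (hint : (interior T).Nonempty) {f : MvPolynomial ι ℝ} (hf : ∀ x ∈ T, 0 ≤ eval x f)
    (h : ∫ x in T, eval x f ∂μ = 0) : f = 0 := by
  have hcont := f.continuous_eval
  have hae := (setIntegral_eq_zero_iff_of_nonneg_ae (ae_restrict_of_forall_mem hT.measurableSet hf)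
    (hcont.continuousOn.integrableOn_compact hT)).1 h
  exact eq_zero_of_forall_mem_isOpen_eval_eq_zero isOpen_interior hint <|
    Measure.eqOn_open_of_ae_eq (ae_restrict_of_ae_restrict_of_subset interior_subset hae)
      isOpen_interior hcont.continuousOn continuousOn_const

lemma eq_zero_of_setIntegral_sum_mul_sq_eq_zero [Finite ι] {α : Type*} [Fintype α]
    (hT : IsCompact T) (hint : (interior T).Nonempty) {u q : α → MvPolynomial ι ℝ}
    (hu : ∀ i, u i ≠ 0) (hnonneg : ∀ i, ∀ x ∈ T, 0 ≤ eval x (u i))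
    (h : ∫ x in T, eval x (∑ i, u i * q i ^ 2) ∂μ = 0) (i : α) : q i = 0 := by
  have hterm (i : α) (x) (hx : x ∈ T) : 0 ≤ eval x (u i * q i ^ 2) := by
    rw [map_mul, map_pow]
    exact mul_nonneg (hnonneg i x hx) (sq_nonneg _)
  have hsum : ∑ i, u i * q i ^ 2 = 0 := eq_zero_of_setIntegral_eval_eq_zero hT hint
    (fun x hx => by simpa only [map_sum] using Finset.sum_nonneg fun i _ => hterm i x hx) h
  have hprod : u i * q i ^ 2 = 0 :=
    eq_zero_of_forall_mem_isOpen_eval_eq_zero isOpen_interior hint fun x hx => by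
      have hx0 := congrArg (eval x) hsum
      rw [map_sum, map_zero, Finset.sum_eq_zero_iff_of_nonneg
        fun j _ => hterm j x (interior_subset hx)] at hx0
      exact hx0 i (Finset.mem_univ i)
  exact pow_eq_zero_iff two_ne_zero |>.1 ((mul_eq_zero.1 hprod).resolve_left (hu i))

lemma eq_zero_of_setIntegral_sum_baryPoly_mul_sq_eq_zero [Fintype ι] {κ : Type*} [Finite κ]
    (b : AffineBasis κ ℝ (ι → ℝ)) {α : Type*} [Fintype α] {e : α → κ}
    {q : Matrix α α (MvPolynomial ι ℝ)}
    (h : ∫ x in convexHull ℝ (Set.range b),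
      eval x (∑ i, ∑ j, baryPoly b (e i) * baryPoly b (e j) * q i j ^ 2) ∂μ = 0) :
    q = 0 := by
  have hne (i : κ) : baryPoly b i ≠ 0 := fun h0 => by
    simpa using congrArg (eval (b i)) h0
  have hnonneg (i : κ) (x) (hx : x ∈ convexHull ℝ (Set.range b)) :
      0 ≤ eval x (baryPoly b i) := by
    rw [b.convexHull_eq_nonneg_coord] at hx
    simpa using hx i
  rw [← Fintype.sum_prod_type'] at h
  ext1 i j
  exact eq_zero_of_setIntegral_sum_mul_sq_eq_zero
    (u := fun ij : α × α => baryPoly b (e ij.1) * baryPoly b (e ij.2))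
    (q := fun ij => q ij.1 ij.2) ((Set.finite_range b).isCompact_convexHull ℝ)
    (interior_convexHull_range_nonempty b) (fun _ => mul_ne_zero (hne _) (hne _))
    (fun _ x hx => by
      rw [map_mul]; exact mul_nonneg (hnonneg _ x hx) (hnonneg _ x hx)) h (i, j)

end Positivity

theorem antisym_poly_vanish_of_orth_and_boundary_general {ι κ : Type*} [Fintype ι] [Finite κ]
    (k : ℕ) (b : AffineBasis κ ℝ (ι → ℝ)) (o : κ) (μ : Measure (ι → ℝ)) [μ.IsOpenPosMeasure]
    [IsFiniteMeasureOnCompacts μ] (n : κ → ι → ℝ) (hn : ∀ i ≠ o, n i ≠ 0)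
    (hnormal : ∀ i ≠ o, ∀ x ∈ oppositeFacet b i, ∀ y ∈ oppositeFacet b i, (x - y) ⬝ᵥ n i = 0)
    (τ : Matrix ι ι (MvPolynomial ι ℝ)) (hτdeg : ∀ a c, (τ a c).totalDegree ≤ k)
    (hτskw : ∀ a c, τ c a = -τ a c)
    (hface : ∀ i ≠ o, ∀ x ∈ oppositeFacet b i, ∀ a, ∑ c, eval x (τ a c) * n i c = 0)
    (horth : ∀ p : Matrix ι ι (MvPolynomial ι ℝ),
      (∀ a c, (p a c).totalDegree ≤ k - 2) → (∀ a c, p c a = -p a c) →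
      ∫ x in convexHull ℝ (Set.range b), ∑ a, ∑ c, eval x (τ a c) * eval x (p a c) ∂μ = 0) :
    τ = 0 := by
  classical
  have := Fintype.ofFinite κ
  obtain ⟨B, hBN⟩ := exists_mul_of_eq_one_of_dotProduct_eq_zero (b.basisOf o)
    (n := fun i => n i) (fun i => hn i i.2) fun i j hij => by
      simpa using hnormal i i.2 _ (apply_mem_oppositeFacet b (Subtype.coe_ne_coe.2 hij.symm)) _
        (apply_mem_oppositeFacet b i.2.symm)
  set N : Matrix {i // i ≠ o} ι ℝ := Matrix.of fun i => n i
  set A := constMatrix ι N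
  obtain ⟨q, hqskew, hqdeg, hFq⟩ := exists_skew_bubble_quotient b o (F := A * τ * Aᵀ)
    (totalDegree_constMatrix_mul_mul_constMatrix_le (B := Nᵀ) hτdeg)
    (transpose_mul_mul_transpose_eq_neg (Matrix.ext hτskw) A)
    fun i j x hx => eval_constMatrix_mul_mul_transpose_eq_zero (hface j j.2 x hx) i
  have hpairing : ∑ a, ∑ c, τ a c * (Aᵀ * q * A) a c
      = ∑ i : {i // i ≠ o}, ∑ j : {i // i ≠ o}, baryPoly b i * baryPoly b j * q i j ^ 2 := by
    simp only [sum_mul_transpose_mul_mul, hFq, pow_two, mul_assoc]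
  have hq : q = 0 := by
    refine eq_zero_of_setIntegral_sum_baryPoly_mul_sq_eq_zero (μ := μ) (e := Subtype.val) b ?_
    simpa only [← hpairing, map_sum, map_mul] using horth (Aᵀ * q * A)
      (totalDegree_constMatrix_mul_mul_constMatrix_le (A := Nᵀ) hqdeg)
      (congrFun₂ (transpose_mul_mul_transpose_eq_neg hqskew Aᵀ))
  have hBA : constMatrix ι B * A = 1 := by
    rw [← Matrix.map_mul, hBN, Matrix.map_one _ C_0 C_1]
  exact eq_zero_of_mul_mul_transpose_eq_zero hBA <| Matrix.ext fun i j => by simp [hFq, hq]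

/-- If an antisymmetric-matrix-valued polynomial
`τ ∈ P_k(T; 𝕂)` on a `d`-simplex `T` satisfies `(τ, q)_T = 0` (L² Frobenius
pairing) for all antisymmetric-matrix-valued `q ∈ P_{k-2}(T; 𝕂)`, and
`τ n = 0` on every face of `T` (with `n` the normal to that face), then
`τ = 0`. -/
theorem antisym_poly_vanish_of_orth_and_boundary (d k : ℕ) (hd : 1 ≤ d)
    (v : Fin (d + 1) → Fin d → ℝ) (hv : AffineIndependent ℝ v)
    (T : Set (Fin d → ℝ)) (hT : T = convexHull ℝ (Set.range v))
    (n : Fin (d + 1) → Fin d → ℝ) (hn : ∀ i, n i ≠ 0)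
    (hnormal : ∀ i, ∀ x ∈ convexHull ℝ (v '' ({i}ᶜ : Set (Fin (d + 1)))),
      ∀ y ∈ convexHull ℝ (v '' ({i}ᶜ : Set (Fin (d + 1)))), (x - y) ⬝ᵥ n i = 0)
    (τ : Matrix (Fin d) (Fin d) (MvPolynomial (Fin d) ℝ))
    (hτdeg : ∀ a b, (τ a b).totalDegree ≤ k)
    (hτskw : ∀ a b, τ b a = - τ a b)
    (hface : ∀ i, ∀ x ∈ convexHull ℝ (v '' ({i}ᶜ : Set (Fin (d + 1)))),
      ∀ a, ∑ b, eval x (τ a b) * n i b = 0)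
    (horth : ∀ p : Matrix (Fin d) (Fin d) (MvPolynomial (Fin d) ℝ),
      (∀ a b, (p a b).totalDegree ≤ k - 2) → (∀ a b, p b a = - p a b) →
      ∫ x in T, ∑ a, ∑ b, eval x (τ a b) * eval x (p a b) = 0) :
    τ = 0 := by
  subst hT
  let b : AffineBasis (Fin (d + 1)) ℝ (Fin d → ℝ) :=
    ⟨v, hv, hv.affineSpan_eq_top_iff_card_eq_finrank_add_one.2 (by simp)⟩
  exact antisym_poly_vanish_of_orth_and_boundary_general k b 0 volume n (fun i _ => hn i)
    (fun i _ => hnormal i) τ hτdeg hτskw (fun i _ => hface i) horth
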